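/- Reverse circulant link structure: for the link function L(i,j) = (i+j) mod n on {1,...,n}^2, the matrices RC with entries RC(i,j) = x(L(i,j)) half commute in the sense that for any three reverse circulant matrices A, B, C (with arbitrary input sequences, same n), ABC = CBA. -/

import Mathlib

/-!
A product of two reverse circulants is circulant, and a circulant times a reverse circulant is again
reverse circulant. So `A * B * C` is reverse circulant, hence symmetric, and transposing it reverses
the order of its symmetric factors.
-/

section ReverseCirculant

open Matrix

variable {G R : Type*}

/-- The reverse circulant matrix generated by `v`, the counterpart of `Matrix.circulant` with
`i + j` in place of `i - j`. The paper's `n × n` case is `G = ZMod n`. -/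
def reverseCirculant [Add G] (v : G → R) : Matrix G G R :=
  of fun i j => v (i + j)

@[simp]
theorem reverseCirculant_apply [Add G] (v : G → R) (i j : G) :
    reverseCirculant v i j = v (i + j) := rfl

theorem isSymm_reverseCirculant [AddCommMagma G] (v : G → R) : (reverseCirculant v).IsSymm :=
  IsSymm.ext fun i j => congrArg v (add_comm j i)

theorem reverseCirculant_mul_reverseCirculant [AddCommGroup G] [Fintype G]
    [NonUnitalNonAssocSemiring R] (v w : G → R) :
    reverseCirculant v * reverseCirculant w = circulant (reverseCirculant v *ᵥ w) := by
  ext i k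
  simp only [mul_apply, circulant_apply, mulVec, dotProduct, reverseCirculant_apply]
  refine Fintype.sum_equiv (Equiv.addRight k) _ _ fun j => ?_
  have shift : i - k + (j + k) = i + j := by abel
  rw [Equiv.coe_addRight, shift]

theorem circulant_mul_reverseCirculant [AddGroup G] [Fintype G]
    [NonUnitalNonAssocSemiring R] (v w : G → R) :
    circulant v * reverseCirculant w = reverseCirculant (circulant v *ᵥ w) := by
  ext i k
  simp only [mul_apply, circulant_apply, mulVec, dotProduct, reverseCirculant_apply]
  refine Fintype.sum_equiv (Equiv.addRight k) _ _ fun j => ?_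
  rw [Equiv.coe_addRight, add_sub_add_right_eq_sub]

theorem reverse_circulant_half_commute_general [AddCommGroup G] [Fintype G]
    [NonUnitalCommSemiring R] (a b c : G → R) :
    reverseCirculant a * reverseCirculant b * reverseCirculant c =
      reverseCirculant c * reverseCirculant b * reverseCirculant a := by
  have isSymm_mul : (reverseCirculant a * reverseCirculant b * reverseCirculant c).IsSymm := by
    rw [reverseCirculant_mul_reverseCirculant, circulant_mul_reverseCirculant]
    exact isSymm_reverseCirculant _
  calc reverseCirculant a * reverseCirculant b * reverseCirculant c
      = (reverseCirculant a * reverseCirculant b * reverseCirculant c)ᵀ := isSymm_mul.eq.symm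
    _ = (reverseCirculant c)ᵀ * ((reverseCirculant b)ᵀ * (reverseCirculant a)ᵀ) := by
      rw [transpose_mul, transpose_mul]
    _ = reverseCirculant c * reverseCirculant b * reverseCirculant a := by
      simp only [(isSymm_reverseCirculant _).eq, Matrix.mul_assoc]

end ReverseCirculant

/-- Reverse circulant matrices half commute: if `A, B, C` are `n × n`
matrices (indices taken mod `n`) whose entries depend only on `(i + j) mod n`,
i.e. `A i j = a (i + j)`, `B i j = b (i + j)`, `C i j = c (i + j)` for some
input sequences `a, b, c`, then `A * B * C = C * B * A`. -/
theorem reverse_circulant_half_commute {n : ℕ} [NeZero n] {R : Type*}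
    [CommRing R] (A B C : Matrix (ZMod n) (ZMod n) R)
    (a b c : ZMod n → R)
    (hA : ∀ i j, A i j = a (i + j))
    (hB : ∀ i j, B i j = b (i + j))
    (hC : ∀ i j, C i j = c (i + j)) :
    A * B * C = C * B * A := by
  obtain rfl : A = reverseCirculant a := Matrix.ext hA
  obtain rfl : B = reverseCirculant b := Matrix.ext hB
  obtain rfl : C = reverseCirculant c := Matrix.ext hC
  exact reverse_circulant_half_commute_general a b c
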